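/- For every integer sequence (p_1,…,p_n) with 0 ≤ p_i ≤ 2(i−1), the number of tiles of DTS(p_1,…,p_n) equals the nesting number of the perfect matching match(p_1,…,p_n), which also equals the number of inversions of the min-word of match(p_1,…,p_n): tiles(DTS(p_1,…,p_n)) = nestings(match(p_1,…,p_n)) = inv(min-word(match(p_1,…,p_n))). -/

import Mathlib

open Finset

noncomputable section

/-- A Dyck path of order `n`: a word of `2n` steps (`true` = up-step `(+1,+1)`,
`false` = down-step `(+1,-1)`) from `(-n,0)` to `(n,0)` staying weakly above the x-axis. -/
structure DyckPath (n : ℕ) where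
  step : Fin (2 * n) → Bool
  balanced : (Finset.univ.filter fun i => step i = true).card = n
  nonneg : ∀ k : ℕ, k ≤ 2 * n →
    (Finset.univ.filter fun i : Fin (2 * n) => (i : ℕ) < k ∧ step i = false).card ≤
      (Finset.univ.filter fun i : Fin (2 * n) => (i : ℕ) < k ∧ step i = true).card

namespace DyckPath

/-- Height of the path above column `x` (columns run from `-n` to `n`). -/
def ht {n : ℕ} (P : DyckPath n) (x : ℤ) : ℤ :=
  ((Finset.univ.filter fun i : Fin (2 * n) => ((i : ℕ) : ℤ) < x + n ∧ P.step i = true).card : ℤ) -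
    ((Finset.univ.filter fun i : Fin (2 * n) => ((i : ℕ) : ℤ) < x + n ∧ P.step i = false).card : ℤ)

/-- Height of the path at lattice point number `k`, `0 ≤ k ≤ 2n`
(point `k` lies at column `k - n`). -/
def pt {n : ℕ} (P : DyckPath n) (k : ℕ) : ℤ := P.ht ((k : ℤ) - n)

end DyckPath

/-- `IsChord P p q`: the up-step at (0-indexed) position `p` matches the down-step at
position `q`, forming a chord of `P`. -/
def IsChord {n : ℕ} (P : DyckPath n) (p q : ℕ) : Prop :=
  p < q ∧ q < 2 * n ∧
    (∃ hp : p < 2 * n, P.step ⟨p, hp⟩ = true) ∧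
    (∃ hq : q < 2 * n, P.step ⟨q, hq⟩ = false) ∧
    P.pt (q + 1) = P.pt p ∧
    ∀ m : ℕ, p < m → m ≤ q → P.pt p < P.pt m

/-- A natural labeling of the chord poset of `P`: the chord labeled `i` has its up-step at
(0-indexed) position `l i` and matching down-step at position `r i`; distinct labels name
distinct chords; and if one chord is nested inside another it receives a larger label. -/
structure ChordLabeling {n : ℕ} (P : DyckPath n) where
  l : Fin n → ℕ
  r : Fin n → ℕ
  chord : ∀ i, IsChord P (l i) (r i)
  inj : Function.Injective l
  natural : ∀ i j : Fin n, l j < l i → r i < r j → j < i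

/-- The length of the chord labeled `i`: the number of up steps of `P` between and
including its two endpoints. -/
def chordLen {n : ℕ} {P : DyckPath n} (C : ChordLabeling P) (i : Fin n) : ℕ :=
  (Finset.univ.filter fun m : Fin (2 * n) =>
    C.l i ≤ (m : ℕ) ∧ (m : ℕ) ≤ C.r i ∧ P.step m = true).card

/-- The growth sequence `p_1, …, p_n` associated with a natural chord labeling:
`p i = #{j<i : l j < l i} + #{j<i : r j < l i}`. -/
def seqOf {n : ℕ} {P : DyckPath n} (C : ChordLabeling P) (i : Fin n) : ℕ :=
  (Finset.univ.filter fun j : Fin n => j < i ∧ C.l j < C.l i).card +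
    (Finset.univ.filter fun j : Fin n => j < i ∧ C.r j < C.l i).card

/-- `σ` is the standardization of the word `w` (with distinct letters). -/
def IsStandardization {n : ℕ} (w : Fin n → ℕ) (σ : Equiv.Perm (Fin n)) : Prop :=
  ∀ i j : Fin n, σ i < σ j ↔ w i < w j

/-- `σ ∈ 𝓛(P_λ)`: σ is `L₀ ∘ L⁻¹` for some natural labeling `L` of the chord poset,
equivalently the standardization of the word of left endpoints of a natural labeling. -/
def LinExt {n : ℕ} (P : DyckPath n) (σ : Equiv.Perm (Fin n)) : Prop :=
  ∃ C : ChordLabeling P, IsStandardization C.l σ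

/-- Successor index in `Fin n` (used only under the guard `i+1 < n`). -/
def nextIdx {n : ℕ} (i : Fin n) : Fin n := ⟨((i : ℕ) + 1) % n, Nat.mod_lt _ i.pos⟩

/-- Descent set of a word: positions `i` with `i+1 < n` and `w i > w (i+1)`. -/
def descentFinset {n : ℕ} (w : Fin n → ℕ) : Finset (Fin n) :=
  Finset.univ.filter fun i => (i : ℕ) + 1 < n ∧ w (nextIdx i) < w i

/-- Number of inversions of a word. -/
def wordInv {n : ℕ} (w : Fin n → ℕ) : ℕ :=
  (Finset.univ.filter fun p : Fin n × Fin n => p.1 < p.2 ∧ w p.2 < w p.1).card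

/-- The word of values of a permutation. -/
def permWord {n : ℕ} (σ : Equiv.Perm (Fin n)) : Fin n → ℕ := fun i => (σ i : ℕ)

/-- inv(σ). -/
def permInv {n : ℕ} (σ : Equiv.Perm (Fin n)) : ℕ := wordInv (permWord σ)

/-- des(σ). -/
def permDes {n : ℕ} (σ : Equiv.Perm (Fin n)) : ℕ := (descentFinset (permWord σ)).card

/-- `REM_i(w) = {k > i : w i > w k > w (i+1)}`, the right embraced numbers. -/
def remSet {n : ℕ} (w : Fin n → ℕ) (i : Fin n) : Finset (Fin n) :=
  Finset.univ.filter fun k => i < k ∧ w (nextIdx i) < w k ∧ w k < w i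

/-- desdif(σ) = Σ_{i ∈ DES σ} (σ i − σ (i+1)). -/
def desdif {n : ℕ} (σ : Equiv.Perm (Fin n)) : ℕ :=
  ∑ i ∈ descentFinset (permWord σ), (permWord σ i - permWord σ (nextIdx i))

/-- res(σ) = Σ_{i ∈ DES σ} #{k < i : σ i > σ k > σ (i+1)}. -/
def resStat {n : ℕ} (σ : Equiv.Perm (Fin n)) : ℕ :=
  ∑ i ∈ descentFinset (permWord σ),
    (Finset.univ.filter fun k : Fin n =>
      k < i ∧ permWord σ (nextIdx i) < permWord σ k ∧ permWord σ k < permWord σ i).card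

/-- The Mahonian statistic mad(σ) = desdif(σ) + res(σ). -/
def mad {n : ℕ} (σ : Equiv.Perm (Fin n)) : ℕ := desdif σ + resStat σ

/-- σ avoids the pattern 231. -/
def Avoids231 {n : ℕ} (σ : Equiv.Perm (Fin n)) : Prop :=
  ¬∃ i j k : Fin n, i < j ∧ j < k ∧ σ k < σ i ∧ σ i < σ j

/-- The boxes of the skew shape `lam/mu` (with `mu` weakly above `lam`), each box
recorded by its bottom corner (a lattice point `(x, z)` with `z ≡ x + n (mod 2)`). -/
def skewCells {n : ℕ} (lam mu : DyckPath n) : Finset (ℤ × ℤ) :=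
  ((Finset.Icc (-(n : ℤ)) n) ×ˢ (Finset.Icc (0 : ℤ) n)).filter fun c =>
    lam.ht c.1 ≤ c.2 ∧ c.2 + 2 ≤ mu.ht c.1 ∧ (c.2 - c.1 - n) % 2 = 0

/-- A Dyck tile, recorded by the set of bottom corners of its boxes: these form
a Dyck-path shape, i.e. a ±1-step lattice path whose two ends are lowest. -/
def IsDyckTile (t : Finset (ℤ × ℤ)) : Prop :=
  ∃ (a b : ℤ) (f : ℤ → ℤ), a ≤ b ∧
    (∀ x : ℤ, a ≤ x → x < b → f (x + 1) = f x + 1 ∨ f (x + 1) = f x - 1) ∧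
    f b = f a ∧ (∀ x : ℤ, a ≤ x → x ≤ b → f a ≤ f x) ∧
    t = (Finset.Icc a b).image fun x => (x, f x)

/-- A Dyck tiling of order `n`: a tiling of the skew shape between two Dyck paths of
order `n` by Dyck tiles. -/
structure DyckTiling (n : ℕ) where
  lower : DyckPath n
  upper : DyckPath n
  below : ∀ x : ℤ, lower.ht x ≤ upper.ht x
  tiles : Finset (Finset (ℤ × ℤ))
  isDyck : ∀ t ∈ tiles, IsDyckTile t
  disj : ∀ t ∈ tiles, ∀ u ∈ tiles, t ≠ u → Disjoint t u
  cover : tiles.biUnion id = skewCells lower upper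

namespace DyckTiling

/-- Number of boxes of the skew shape. -/
def area {n : ℕ} (T : DyckTiling n) : ℕ := (skewCells T.lower T.upper).card

/-- Number of tiles. -/
def numTiles {n : ℕ} (T : DyckTiling n) : ℕ := T.tiles.card

/-- art(T) = (area(T) + tiles(T)) / 2. -/
def art {n : ℕ} (T : DyckTiling n) : ℕ := (T.area + T.numTiles) / 2

/-- dis(T): the number of step positions where the lower path steps down while the
upper path steps up. -/
def dis {n : ℕ} (T : DyckTiling n) : ℕ :=
  (Finset.univ.filter fun i : Fin (2 * n) =>
    T.lower.step i = false ∧ T.upper.step i = true).card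

/-- Cover-inclusiveness: whenever a tile has a box strictly above a box of another tile,
its horizontal extent is contained in that of the other tile. -/
def CoverInclusive {n : ℕ} (T : DyckTiling n) : Prop :=
  ∀ t ∈ T.tiles, ∀ u ∈ T.tiles,
    (∃ p ∈ t, ∃ q ∈ u, (p : ℤ × ℤ).1 = (q : ℤ × ℤ).1 ∧ (q : ℤ × ℤ).2 < (p : ℤ × ℤ).2) →
    ∀ p ∈ t, ∃ y : ℤ, ((p : ℤ × ℤ).1, y) ∈ u

end DyckTiling

/-- Height function of the spread at column `s` of a Dyck path. -/
def spreadHt {n : ℕ} (P : DyckPath n) (s x : ℤ) : ℤ :=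
  if x < s then P.ht (x + 1) else if x = s then P.ht s + 1 else P.ht (x - 1)

/-- Spread of a tile at column `s`: points left of `s` move left, points right of `s`
move right, and a point at column `s` is duplicated upward. -/
def spreadTile (s : ℤ) (t : Finset (ℤ × ℤ)) : Finset (ℤ × ℤ) :=
  ((t.filter fun p => p.1 ≤ s).image fun p => (p.1 - 1, p.2)) ∪
    ((t.filter fun p => p.1 = s).image fun p => (p.1, p.2 + 1)) ∪
    ((t.filter fun p => s ≤ p.1).image fun p => (p.1 + 1, p.2))

/-- Spread of a set of tiles at column `s`. -/
def spreadTiles (s : ℤ) (ts : Finset (Finset (ℤ × ℤ))) : Finset (Finset (ℤ × ℤ)) :=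
  ts.image (spreadTile s)

/-- Column `c` is eligible for a tiling with upper-boundary height function `h` and
tile set `ts`: the upper boundary has an up step ending at column `c`, and its point at
column `c` is not the top corner of a one-box tile. -/
def EligibleCol (h : ℤ → ℤ) (ts : Finset (Finset (ℤ × ℤ))) (c : ℤ) : Prop :=
  h c = h (c - 1) + 1 ∧ ({(c, h c - 2)} : Finset (ℤ × ℤ)) ∉ ts

/-- `T'` is the result of the strip-grow map applied to `(T, s)`: spread `T` at `s` and
add a one-box tile on each up step of the (spread) upper boundary starting at a column
`≥ s` (i.e. strictly to the right of column `s`). -/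
def StripGrowRel {n : ℕ} (T : DyckTiling n) (s : ℤ) (T' : DyckTiling (n + 1)) : Prop :=
  (∀ x : ℤ, T'.lower.ht x = spreadHt T.lower s x) ∧
  (∀ x : ℤ, T'.upper.ht x =
    if s ≤ x ∧ spreadHt T.upper s (x + 1) = spreadHt T.upper s x + 1 then
      spreadHt T.upper s x + 2
    else spreadHt T.upper s x) ∧
  T'.tiles = spreadTiles s T.tiles ∪
    ((Finset.Icc s (n : ℤ)).filter fun x =>
        spreadHt T.upper s (x + 1) = spreadHt T.upper s x + 1).image
      (fun x => ({(x, spreadHt T.upper s x)} : Finset (ℤ × ℤ)))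

/-- `T'` is the result of the ribbon-grow map applied to `(T, s)`: spread `T` at `s`,
and if the special column `Q` of the spread tiling is strictly right of `s`, add a
ribbon of one-box tiles at all columns strictly between `s` and `Q`. -/
def RibbonGrowRel {n : ℕ} (T : DyckTiling n) (s : ℤ) (T' : DyckTiling (n + 1)) : Prop :=
  (∀ x : ℤ, T'.lower.ht x = spreadHt T.lower s x) ∧
  ∃ Q : ℤ,
    EligibleCol (spreadHt T.upper s) (spreadTiles s T.tiles) Q ∧
    (∀ c : ℤ, EligibleCol (spreadHt T.upper s) (spreadTiles s T.tiles) c → c ≤ Q) ∧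
    (∀ x : ℤ, T'.upper.ht x =
      if s < x ∧ x < Q then spreadHt T.upper s x + 2 else spreadHt T.upper s x) ∧
    T'.tiles = spreadTiles s T.tiles ∪
      (Finset.Ioo s Q).image (fun x => ({(x, spreadHt T.upper s x)} : Finset (ℤ × ℤ)))

/-- `s` is the special column of `T`: its rightmost eligible column. -/
def SpecialCol {n : ℕ} (T : DyckTiling n) (s : ℤ) : Prop :=
  EligibleCol T.upper.ht T.tiles s ∧ ∀ c : ℤ, EligibleCol T.upper.ht T.tiles c → c ≤ s

/-- In the strip-shrink map applied to `T'` with special column `s`, a one-box tile is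
removed at column `x`: `x` is right of `s` and there is a one-box tile there that is
part of an up step of the upper boundary. -/
def StripRemovedAt {n : ℕ} (T' : DyckTiling n) (s x : ℤ) : Prop :=
  s < x ∧ T'.upper.ht x = T'.upper.ht (x - 1) + 1 ∧
    ({(x, T'.upper.ht x - 2)} : Finset (ℤ × ℤ)) ∈ T'.tiles

instance {n : ℕ} (T' : DyckTiling n) (s x : ℤ) : Decidable (StripRemovedAt T' s x) := by
  unfold StripRemovedAt; infer_instance

/-- `(T, s)` is the result of the strip-shrink map applied to `T'`: `s` is the special
column of `T'`; all one-box tiles right of `s` lying on up steps of the upper boundary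
are removed; and the result is the spread of `T` at `s`. -/
def StripShrinkRel {n : ℕ} (T' : DyckTiling (n + 1)) (T : DyckTiling n) (s : ℤ) : Prop :=
  SpecialCol T' s ∧
  (∀ x : ℤ, spreadHt T.lower s x = T'.lower.ht x) ∧
  (∀ x : ℤ, spreadHt T.upper s x =
    if StripRemovedAt T' s x then T'.upper.ht x - 2 else T'.upper.ht x) ∧
  spreadTiles s T.tiles =
    T'.tiles \ (((Finset.Ioc s ((n : ℤ) + 1)).filter fun x => StripRemovedAt T' s x).image
      fun x => ({(x, T'.upper.ht x - 2)} : Finset (ℤ × ℤ)))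

/-- `(T, s)` is the result of the ribbon-shrink map applied to `T'`: `s` is the special
column of `T'`; the maximal run of topmost one-box tiles in columns `s+1, s+2, …` is
removed; and the result is the spread of `T` at `s`. -/
def RibbonShrinkRel {n : ℕ} (T' : DyckTiling (n + 1)) (T : DyckTiling n) (s : ℤ) : Prop :=
  SpecialCol T' s ∧
  ∃ r : ℤ, s < r ∧
    (∀ x : ℤ, s < x → x < r → ({(x, T'.upper.ht x - 2)} : Finset (ℤ × ℤ)) ∈ T'.tiles) ∧
    ({(r, T'.upper.ht r - 2)} : Finset (ℤ × ℤ)) ∉ T'.tiles ∧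
    (∀ x : ℤ, spreadHt T.lower s x = T'.lower.ht x) ∧
    (∀ x : ℤ, spreadHt T.upper s x =
      if s < x ∧ x < r then T'.upper.ht x - 2 else T'.upper.ht x) ∧
    spreadTiles s T.tiles =
      T'.tiles \ ((Finset.Ioo s r).image fun x => ({(x, T'.upper.ht x - 2)} : Finset (ℤ × ℤ)))

/-- `IsDTS n p T`: `T` is the Dyck tiling `DTS(p_1, …, p_n)` (indices 0-based, so the
growth column for step `i` is `p i - i`). -/
inductive IsDTS : (n : ℕ) → (Fin n → ℕ) → DyckTiling n → Prop where
  | nil (p : Fin 0 → ℕ) (T : DyckTiling 0) : IsDTS 0 p T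
  | cons (n : ℕ) (p : Fin (n + 1) → ℕ) (T : DyckTiling n) (T' : DyckTiling (n + 1)) :
      IsDTS n (fun i => p i.castSucc) T →
      StripGrowRel T ((p (Fin.last n) : ℤ) - n) T' → IsDTS (n + 1) p T'

/-- `IsDTR n p T`: `T` is the Dyck tiling `DTR(p_1, …, p_n)`. -/
inductive IsDTR : (n : ℕ) → (Fin n → ℕ) → DyckTiling n → Prop where
  | nil (p : Fin 0 → ℕ) (T : DyckTiling 0) : IsDTR 0 p T
  | cons (n : ℕ) (p : Fin (n + 1) → ℕ) (T : DyckTiling n) (T' : DyckTiling (n + 1)) :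
      IsDTR n (fun i => p i.castSucc) T →
      RibbonGrowRel T ((p (Fin.last n) : ℤ) - n) T' → IsDTR (n + 1) p T'

/-- `T = DTS(λ, σ)`. -/
def IsDTSof {n : ℕ} (lam : DyckPath n) (σ : Equiv.Perm (Fin n)) (T : DyckTiling n) : Prop :=
  ∃ C : ChordLabeling lam, IsStandardization C.l σ ∧ IsDTS n (seqOf C) T

/-- `T = DTR(λ, σ)`. -/
def IsDTRof {n : ℕ} (lam : DyckPath n) (σ : Equiv.Perm (Fin n)) (T : DyckTiling n) : Prop :=
  ∃ C : ChordLabeling lam, IsStandardization C.l σ ∧ IsDTR n (seqOf C) T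

/-- Increment `a` if it exceeds `p`. -/
def bump (p a : ℕ) : ℕ := if p < a then a + 1 else a

/-- The perfect matching `match(p_1, …, p_n)` of `{1, …, 2n}`. -/
def matchSeq : (n : ℕ) → (Fin n → ℕ) → Finset (ℕ × ℕ)
  | 0, _ => ∅
  | n + 1, p =>
    ((matchSeq n fun i => p i.castSucc).image fun q =>
      (bump (p (Fin.last n)) q.1, bump (p (Fin.last n)) q.2)) ∪
      {(p (Fin.last n) + 1, 2 * (n + 1))}

/-- The number of nestings of a matching: pairs `(a,b)`, `(c,d)` with `c < a < b < d`. -/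
def nestings (M : Finset (ℕ × ℕ)) : ℕ :=
  ((M ×ˢ M).filter fun q => q.2.1 < q.1.1 ∧ q.1.1 < q.1.2 ∧ q.1.2 < q.2.2).card

/-- `w` is the min-word of `M`: the list of the smaller elements of the pairs of `M`,
sorted by the larger elements. -/
def IsMinWord (n : ℕ) (M : Finset (ℕ × ℕ)) (w : Fin n → ℕ) : Prop :=
  ∃ b : Fin n → ℕ, StrictMono b ∧ (∀ i, w i < b i) ∧
    M = Finset.univ.image fun i => (w i, b i)

/-- The number of tiles of `T` containing boxes over both endpoint columns of the
chord with endpoints at step positions `p < q`. -/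
def chordTileCount {n : ℕ} (T : DyckTiling n) (p q : ℕ) : ℕ :=
  (T.tiles.filter fun t =>
    (∃ c ∈ t, (c : ℤ × ℤ).1 = (p : ℤ) + 1 - n) ∧ (∃ c ∈ t, (c : ℤ × ℤ).1 = (q : ℤ) - n)).card

/-- A Dyck tableau of order `n` over the zigzag path `Z` of order `n+1`: a skew shape
`Z/μ` with `n` dots, one in each column of the skew shape through a valley of `Z`. -/
structure DyckTableau (n : ℕ) (Z : DyckPath (n + 1)) where
  upper : DyckPath (n + 1)
  below : ∀ x : ℤ, Z.ht x ≤ upper.ht x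
  dots : Finset (ℤ × ℤ)
  sub : dots ⊆ skewCells Z upper
  card_dots : dots.card = n
  valley : ∀ x : ℤ, Z.ht (x - 1) = Z.ht x + 1 → Z.ht (x + 1) = Z.ht x + 1 →
    (dots.filter fun c => c.1 = x).card = 1

/-- The `q`-integer `[m]_q = 1 + q + ⋯ + q^(m-1)` as a polynomial. -/
def qint (m : ℕ) : Polynomial ℤ := ∑ i ∈ Finset.range m, Polynomial.X ^ i

/-- The `q`-factorial `[n]_q!`. -/
def qfact (n : ℕ) : Polynomial ℤ := ∏ i ∈ Finset.range n, qint (i + 1)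

/-!
Strip-growing at column `s` inserts an up step ending at `s` into the upper boundary and appends a
down step. Inserting the arc `(p + 1, 2n + 2)` into a matching shifts the smaller elements of the
arcs in the same way, so the up steps of the upper boundary of `DTS(p)` always sit at the smaller
elements of the arcs of `match(p)`. One growth step adds one tile for each up step to the right of
`s`, and the new arc, whose larger element exceeds all others, encloses exactly the arcs whose
smaller element lies to the right of `p`; hence tiles and nestings grow by the same amount.
When the arcs are sorted by larger element, a nesting is an inversion of the smaller elements.
-/

namespace DyckPath

variable {n : ℕ} (P : DyckPath n)

theorem ht_eq_sum (x : ℤ) :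
    P.ht x =
      ∑ i : Fin (2 * n), if ((i : ℕ) : ℤ) < x + n then (if P.step i then 1 else -1) else 0 := by
  rw [ht, card_filter, card_filter]
  push_cast
  rw [← sum_sub_distrib]
  refine sum_congr rfl fun i _ => ?_
  by_cases hi : ((i : ℕ) : ℤ) < x + n <;> cases P.step i <;> simp [hi]

theorem ht_sub_ht_sub_one (x : ℤ) :
    P.ht x - P.ht (x - 1) =
      ∑ i : Fin (2 * n), if ((i : ℕ) : ℤ) + 1 = x + n then (if P.step i then 1 else -1) else 0 := by
  rw [ht_eq_sum, ht_eq_sum, ← sum_sub_distrib]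
  refine sum_congr rfl fun i _ => ?_
  split_ifs <;> omega

theorem ht_eq_add_one_or_sub_one {x : ℤ} (hx : x ∈ Ioc (-(n : ℤ)) n) :
    P.ht x = P.ht (x - 1) + 1 ∨ P.ht x = P.ht (x - 1) - 1 := by
  obtain ⟨hx₁, hx₂⟩ := mem_Ioc.mp hx
  obtain ⟨k, hk⟩ : ∃ k : Fin (2 * n), x + n = ((k : ℕ) : ℤ) + 1 :=
    ⟨⟨(x + n - 1).toNat, by omega⟩, by simp only; omega⟩
  have hstep := P.ht_sub_ht_sub_one x
  simp only [hk, add_left_inj, Nat.cast_inj, Fin.val_inj, sum_ite_eq', mem_univ, if_true] at hstep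
  split_ifs at hstep <;> omega

theorem ht_eq_ht_sub_one {x : ℤ} (hx : x ∉ Ioc (-(n : ℤ)) n) : P.ht x = P.ht (x - 1) := by
  rw [← sub_eq_zero, ht_sub_ht_sub_one]
  refine sum_eq_zero fun i _ => if_neg ?_
  rw [mem_Ioc] at hx
  omega

theorem ht_order_zero (P : DyckPath 0) (x : ℤ) : P.ht x = 0 := by
  rw [ht_eq_sum]
  exact Fin.sum_univ_zero _

/-- The columns of the right ends of the up steps of a Dyck path. -/
def upCols : Finset ℤ :=
  {x ∈ Ioc (-(n : ℤ)) n | P.ht x = P.ht (x - 1) + 1}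

theorem upCols_subset : P.upCols ⊆ Ioc (-(n : ℤ)) n :=
  filter_subset _ _

theorem mem_upCols {x : ℤ} : x ∈ P.upCols ↔ P.ht x = P.ht (x - 1) + 1 := by
  refine mem_filter.trans ⟨And.right, fun h => ⟨?_, h⟩⟩
  by_contra hx
  have := P.ht_eq_ht_sub_one hx
  omega

end DyckPath

section Spread

variable {n : ℕ}

theorem spreadHt_of_lt (P : DyckPath n) {s x : ℤ} (hx : x < s) :
    spreadHt P s x = P.ht (x + 1) :=
  if_pos hx

theorem spreadHt_self (P : DyckPath n) (s : ℤ) : spreadHt P s s = P.ht s + 1 := by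
  simp [spreadHt]

theorem spreadHt_of_gt (P : DyckPath n) {s x : ℤ} (hx : s < x) :
    spreadHt P s x = P.ht (x - 1) := by
  rw [spreadHt, if_neg hx.not_gt, if_neg hx.ne']

theorem spreadHt_add_one_eq_iff (P : DyckPath n) {s x : ℤ} (hx : s ≤ x) :
    spreadHt P s (x + 1) = spreadHt P s x + 1 ↔ s < x ∧ x ∈ P.upCols := by
  rw [P.mem_upCols, spreadHt_of_gt P (by omega), add_sub_cancel_right]
  rcases hx.eq_or_lt with rfl | hx
  · rw [spreadHt_self]
    omega
  · rw [spreadHt_of_gt P hx, and_iff_right hx]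

theorem mem_spreadTile {s : ℤ} {t : Finset (ℤ × ℤ)} {x y : ℤ} :
    (x, y) ∈ spreadTile s t ↔
      (x < s ∧ (x + 1, y) ∈ t) ∨ (x = s ∧ (x, y - 1) ∈ t) ∨ (s < x ∧ (x - 1, y) ∈ t) := by
  simp only [spreadTile, mem_union, mem_image, mem_filter, Prod.exists, Prod.mk.injEq]
  constructor
  · rintro ((⟨a, b, ⟨h, ha⟩, rfl, rfl⟩ | ⟨a, b, ⟨h, ha⟩, rfl, rfl⟩) | ⟨a, b, ⟨h, ha⟩, rfl, rfl⟩)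
    · exact Or.inl ⟨by omega, by simpa using h⟩
    · exact Or.inr (Or.inl ⟨ha, by simpa using h⟩)
    · exact Or.inr (Or.inr ⟨by omega, by simpa using h⟩)
  · rintro (⟨hx, h⟩ | ⟨hx, h⟩ | ⟨hx, h⟩)
    · exact Or.inl (Or.inl ⟨x + 1, y, ⟨h, by omega⟩, by omega, rfl⟩)
    · exact Or.inl (Or.inr ⟨x, y - 1, ⟨h, hx⟩, rfl, by omega⟩)
    · exact Or.inr ⟨x - 1, y, ⟨h, by omega⟩, by omega, rfl⟩

theorem mem_spreadTile_sub_one {s : ℤ} {t : Finset (ℤ × ℤ)} {x y : ℤ} (hx : x ≤ s) :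
    (x - 1, y) ∈ spreadTile s t ↔ (x, y) ∈ t := by
  rw [mem_spreadTile, sub_add_cancel]
  grind

theorem mem_spreadTile_add_one {s : ℤ} {t : Finset (ℤ × ℤ)} {x y : ℤ} (hx : s ≤ x) :
    (x + 1, y) ∈ spreadTile s t ↔ (x, y) ∈ t := by
  rw [mem_spreadTile, add_sub_cancel_right]
  grind

theorem spreadTile_injective (s : ℤ) : Function.Injective (spreadTile s) := by
  intro t u htu
  ext ⟨x, y⟩
  rcases le_total x s with hx | hx
  · rw [← mem_spreadTile_sub_one hx, htu, mem_spreadTile_sub_one hx]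
  · rw [← mem_spreadTile_add_one hx, htu, mem_spreadTile_add_one hx]

end Spread

namespace DyckTiling

theorem mem_skewCells {n : ℕ} (T : DyckTiling n) {t : Finset (ℤ × ℤ)} {c : ℤ × ℤ}
    (ht : t ∈ T.tiles) (hc : c ∈ t) : c ∈ skewCells T.lower T.upper :=
  T.cover ▸ mem_biUnion.mpr ⟨t, ht, hc⟩

theorem add_two_le_ht {n : ℕ} (T : DyckTiling n) {t : Finset (ℤ × ℤ)} {x y : ℤ}
    (ht : t ∈ T.tiles) (hc : (x, y) ∈ t) : y + 2 ≤ T.upper.ht x :=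
  (mem_filter.mp (T.mem_skewCells ht hc)).2.2.1

theorem add_two_le_spreadHt {n : ℕ} (T : DyckTiling n) {t : Finset (ℤ × ℤ)} {s x y : ℤ}
    (ht : t ∈ T.tiles) (hc : (x, y) ∈ spreadTile s t) : y + 2 ≤ spreadHt T.upper s x := by
  rcases mem_spreadTile.mp hc with ⟨hx, hbox⟩ | ⟨rfl, hbox⟩ | ⟨hx, hbox⟩
  · exact spreadHt_of_lt T.upper hx ▸ T.add_two_le_ht ht hbox
  · have := T.add_two_le_ht ht hbox
    rw [spreadHt_self]
    omega
  · exact spreadHt_of_gt T.upper hx ▸ T.add_two_le_ht ht hbox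

theorem numTiles_order_zero (T : DyckTiling 0) : T.numTiles = 0 := by
  refine card_eq_zero.mpr (eq_empty_of_forall_notMem fun t ht => ?_)
  obtain ⟨a, b, f, hab, -, -, -, rfl⟩ := T.isDyck t ht
  have hc := T.mem_skewCells ht (mem_image_of_mem _ (left_mem_Icc.mpr hab))
  simp only [skewCells, mem_filter, mem_product, mem_Icc, T.upper.ht_order_zero] at hc
  omega

end DyckTiling

namespace StripGrowRel

variable {n : ℕ} {T : DyckTiling n} {s : ℤ} {T' : DyckTiling (n + 1)}

theorem upper_ht_of_lt (h : StripGrowRel T s T') {x : ℤ} (hx : x < s) :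
    T'.upper.ht x = T.upper.ht (x + 1) := by
  rw [h.2.1, if_neg fun hs => hx.not_ge hs.1, spreadHt_of_lt T.upper hx]

theorem upper_ht_of_mem_Icc (h : StripGrowRel T s T') (hs : -(n : ℤ) ≤ s) {x : ℤ}
    (hx : x ∈ Icc s (n : ℤ)) : T'.upper.ht x = T.upper.ht x + 1 := by
  obtain ⟨hsx, hxn⟩ := mem_Icc.mp hx
  simp only [h.2.1, hsx, true_and, spreadHt_add_one_eq_iff]
  rcases hsx.eq_or_lt with rfl | hsx
  · rw [if_neg fun hs => hs.1.false, spreadHt_self]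
  · simp only [hsx, true_and, spreadHt_of_gt, T.upper.mem_upCols]
    have := T.upper.ht_eq_add_one_or_sub_one (mem_Ioc.mpr ⟨hs.trans_lt hsx, hxn⟩)
    split_ifs <;> omega

theorem upper_ht_of_gt (h : StripGrowRel T s T') (hs : s ≤ n) {x : ℤ} (hx : (n : ℤ) < x) :
    T'.upper.ht x = T.upper.ht x := by
  have hsx := hs.trans_lt hx
  have hout : x ∉ Ioc (-(n : ℤ)) n := fun hmem => hx.not_ge (mem_Ioc.mp hmem).2
  rw [h.2.1, if_neg, spreadHt_of_gt _ hsx, T.upper.ht_eq_ht_sub_one hout]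
  rintro ⟨-, hup⟩
  exact hout (T.upper.upCols_subset ((spreadHt_add_one_eq_iff _ hsx.le).mp hup).2)

theorem mem_upCols_iff (h : StripGrowRel T s T') (hs : s ∈ Icc (-(n : ℤ)) n) {x : ℤ} :
    x ∈ T'.upper.upCols ↔
      (x < s ∧ x + 1 ∈ T.upper.upCols) ∨ x = s ∨ (s < x ∧ x ∈ T.upper.upCols) := by
  obtain ⟨hs₁, hs₂⟩ := mem_Icc.mp hs
  simp only [DyckPath.mem_upCols, add_sub_cancel_right]
  rcases lt_trichotomy x s with hx | rfl | hx
  · rw [h.upper_ht_of_lt hx, h.upper_ht_of_lt (by omega), sub_add_cancel]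
    omega
  · rw [h.upper_ht_of_mem_Icc hs₁ (left_mem_Icc.mpr hs₂), h.upper_ht_of_lt (by omega),
      sub_add_cancel]
    omega
  rcases le_or_gt x n with hxn | hxn
  · rw [h.upper_ht_of_mem_Icc hs₁ (mem_Icc.mpr ⟨hx.le, hxn⟩),
      h.upper_ht_of_mem_Icc hs₁ (mem_Icc.mpr ⟨by omega, by omega⟩)]
    omega
  · have hflat := T.upper.ht_eq_ht_sub_one fun hmem => hxn.not_ge (mem_Ioc.mp hmem).2
    rw [h.upper_ht_of_gt hs₂ hxn]
    rcases (Int.le_sub_one_of_lt hxn).eq_or_lt with hxn | hxn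
    · rw [h.upper_ht_of_mem_Icc hs₁ (mem_Icc.mpr ⟨by omega, hxn.ge⟩)]
      omega
    · rw [h.upper_ht_of_gt hs₂ hxn]
      omega

theorem numTiles_eq (h : StripGrowRel T s T') :
    T'.numTiles = T.numTiles + #{x ∈ T.upper.upCols | s < x} := by
  have hcols : {x ∈ Icc s (n : ℤ) | spreadHt T.upper s (x + 1) = spreadHt T.upper s x + 1} =
      {x ∈ T.upper.upCols | s < x} := by
    ext x
    refine ⟨fun hx => ?_, fun hx => ?_⟩
    · obtain ⟨hx, hup⟩ := mem_filter.mp hx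
      exact mem_filter.mpr ((spreadHt_add_one_eq_iff _ (mem_Icc.mp hx).1).mp hup).symm
    · obtain ⟨hup, hsx⟩ := mem_filter.mp hx
      exact mem_filter.mpr ⟨mem_Icc.mpr ⟨hsx.le, (mem_Ioc.mp (T.upper.upCols_subset hup)).2⟩,
        (spreadHt_add_one_eq_iff _ hsx.le).mpr ⟨hsx, hup⟩⟩
  have hinj : Function.Injective fun x => ({(x, spreadHt T.upper s x)} : Finset (ℤ × ℤ)) :=
    fun _ _ hxy => congrArg Prod.fst (singleton_injective hxy)
  rw [DyckTiling.numTiles, h.2.2, hcols, card_union_of_disjoint, spreadTiles,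
    card_image_of_injective _ (spreadTile_injective s), card_image_of_injective _ hinj,
    DyckTiling.numTiles]
  rw [disjoint_left]
  rintro _ hspread hbox
  obtain ⟨t, ht, rfl⟩ := mem_image.mp hspread
  obtain ⟨x, -, hx⟩ := mem_image.mp hbox
  have := T.add_two_le_spreadHt ht (hx ▸ mem_singleton_self _)
  omega

end StripGrowRel

section Bump

variable (p : ℕ)

theorem bump_strictMono : StrictMono (bump p) := by
  intro a b hab
  unfold bump
  split_ifs <;> omega

variable {p}

theorem bump_le_add_one (a : ℕ) : bump p a ≤ a + 1 := by
  unfold bump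
  split_ifs <;> omega

theorem bump_ne_add_one (a : ℕ) : bump p a ≠ p + 1 := by
  unfold bump
  split_ifs <;> omega

theorem add_one_lt_bump_iff {a : ℕ} : p + 1 < bump p a ↔ p < a := by
  unfold bump
  split_ifs <;> omega

end Bump

section Nestings

theorem nestings_image {ι : Type*} {φ : ι → ℕ × ℕ} (hφ : Function.Injective φ) (s : Finset ι) :
    nestings (s.image φ) =
      #{q ∈ s ×ˢ s | (φ q.2).1 < (φ q.1).1 ∧ (φ q.1).1 < (φ q.1).2 ∧ (φ q.1).2 < (φ q.2).2} := by
  classical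
  rw [nestings, ← prodMap_image_product, filter_image, card_image_of_injective _ (hφ.prodMap hφ)]
  rfl

theorem nestings_image_prodMap {f : ℕ → ℕ} (hf : StrictMono f) (M : Finset (ℕ × ℕ)) :
    nestings (M.image (Prod.map f f)) = nestings M := by
  rw [nestings_image (hf.injective.prodMap hf.injective)]
  simp only [Prod.map_fst, Prod.map_snd, hf.lt_iff_lt, nestings]

theorem nestings_eq_sum (M : Finset (ℕ × ℕ)) :
    nestings M = ∑ r ∈ M, #{q ∈ M | r.1 < q.1 ∧ q.1 < q.2 ∧ q.2 < r.2} := by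
  simp only [nestings, card_filter, sum_product_right]

theorem nestings_insert_of_lt {M : Finset (ℕ × ℕ)} {c d : ℕ} (hM : ∀ q ∈ M, q.1 < q.2)
    (hd : ∀ q ∈ M, q.2 < d) :
    nestings (insert (c, d) M) = nestings M + #{q ∈ M | c < q.1} := by
  have hnotMem : (c, d) ∉ M := fun h => (hd _ h).false
  have hold : ∀ r ∈ M, #{q ∈ insert (c, d) M | r.1 < q.1 ∧ q.1 < q.2 ∧ q.2 < r.2} =
      #{q ∈ M | r.1 < q.1 ∧ q.1 < q.2 ∧ q.2 < r.2} := fun r hr => by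
    rw [filter_insert, if_neg fun h => (hd r hr).not_gt h.2.2]
  have hnew : #{q ∈ insert (c, d) M | c < q.1 ∧ q.1 < q.2 ∧ q.2 < d} = #{q ∈ M | c < q.1} := by
    rw [filter_insert, if_neg fun h => h.1.false]
    exact congrArg card <| filter_congr fun q hq => and_iff_left ⟨hM q hq, hd q hq⟩
  rw [nestings_eq_sum, sum_insert hnotMem, hnew, sum_congr rfl hold, nestings_eq_sum M, add_comm]

theorem IsMinWord.nestings_eq_wordInv {n : ℕ} {M : Finset (ℕ × ℕ)} {w : Fin n → ℕ}
    (h : IsMinWord n M w) : nestings M = wordInv w := by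
  obtain ⟨b, hb, hwb, rfl⟩ := h
  have hinj : Function.Injective fun i => (w i, b i) :=
    fun _ _ hij => hb.injective (congrArg Prod.snd hij)
  simp only [nestings_image hinj, hwb, hb.lt_iff_lt, true_and, univ_product_univ, wordInv,
    and_comm]

end Nestings

/-- One step of the recursion defining `matchSeq`: relabel the arcs of `M` to make room for `p + 1`
and adjoin the arc `(p + 1, 2 (n + 1))`. -/
def insertArc (n p : ℕ) (M : Finset (ℕ × ℕ)) : Finset (ℕ × ℕ) :=
  insert (p + 1, 2 * (n + 1)) (M.image (Prod.map (bump p) (bump p)))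

theorem matchSeq_succ {n : ℕ} (p : Fin (n + 1) → ℕ) :
    matchSeq (n + 1) p = insertArc n (p (Fin.last n)) (matchSeq n fun i => p i.castSucc) :=
  union_comm _ _

/-- The properties of a matching of `{1, …, 2n}` needed to count its nestings: its arcs are listed
as `(smaller, larger)`, end at `2n` at the latest, and have distinct smaller elements. -/
structure IsArcSet (n : ℕ) (M : Finset (ℕ × ℕ)) : Prop where
  fst_lt_snd : ∀ q ∈ M, q.1 < q.2
  snd_le : ∀ q ∈ M, q.2 ≤ 2 * n
  injOn_fst : Set.InjOn Prod.fst (M : Set (ℕ × ℕ))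

/-- The columns of the right ends of the up steps of a Dyck path of order `n` whose up steps are
numbered by the smaller elements of the arcs of `M`. -/
def minCols (n : ℕ) (M : Finset (ℕ × ℕ)) : Finset ℤ :=
  M.image fun q => (q.1 : ℤ) - n

theorem mem_minCols_insertArc {n p : ℕ} {M : Finset (ℕ × ℕ)} {x : ℤ} :
    x ∈ minCols (n + 1) (insertArc n p M) ↔
      (x < (p : ℤ) - n ∧ x + 1 ∈ minCols n M) ∨ x = (p : ℤ) - n ∨
        ((p : ℤ) - n < x ∧ x ∈ minCols n M) := by
  have hbump (a : ℕ) : (bump p a : ℤ) - (n + 1 : ℕ) = x ↔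
      (x < (p : ℤ) - n ∧ (a : ℤ) - n = x + 1) ∨ ((p : ℤ) - n < x ∧ (a : ℤ) - n = x) := by
    unfold bump
    split_ifs <;> omega
  have hnew : x = ((p + 1 : ℕ) : ℤ) - (n + 1 : ℕ) ↔ x = (p : ℤ) - n := by omega
  simp only [minCols, insertArc, image_insert, image_image, mem_insert, mem_image,
    Function.comp_apply, Prod.map_fst, hbump, hnew]
  grind

namespace IsArcSet

variable {n p : ℕ} {M : Finset (ℕ × ℕ)}

theorem bump_snd_lt (hM : IsArcSet n M) {q : ℕ × ℕ} (hq : q ∈ M) :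
    bump p q.2 < 2 * (n + 1) := by
  have := hM.snd_le q hq
  have := bump_le_add_one (p := p) q.2
  omega

theorem insertArc_of_le (hM : IsArcSet n M) (hp : p ≤ 2 * n) :
    IsArcSet (n + 1) (insertArc n p M) where
  fst_lt_snd := by
    simp only [insertArc, forall_mem_insert, forall_mem_image, Prod.map_fst, Prod.map_snd]
    exact ⟨by omega, fun q hq => bump_strictMono p (hM.fst_lt_snd q hq)⟩
  snd_le := by
    simp only [insertArc, forall_mem_insert, forall_mem_image, Prod.map_snd]
    exact ⟨le_rfl, fun q hq => (hM.bump_snd_lt hq).le⟩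
  injOn_fst := by
    have hnotMem : (p + 1, 2 * (n + 1)) ∉ M.image (Prod.map (bump p) (bump p)) := fun h => by
      obtain ⟨q, -, hq⟩ := mem_image.mp h
      exact bump_ne_add_one _ (congrArg Prod.fst hq)
    rw [insertArc, coe_insert, Set.injOn_insert (mod_cast hnotMem), coe_image]
    have hcomp : Set.InjOn (Prod.fst ∘ Prod.map (bump p) (bump p)) M :=
      (bump_strictMono p).injective.comp_injOn hM.injOn_fst
    refine ⟨hcomp.image_of_comp, ?_⟩
    rintro ⟨_, ⟨q, -, rfl⟩, hq⟩
    exact bump_ne_add_one _ hq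

theorem nestings_insertArc (hM : IsArcSet n M) :
    nestings (insertArc n p M) = nestings M + #{q ∈ M | p < q.1} := by
  have hbump := bump_strictMono p
  rw [insertArc, nestings_insert_of_lt, nestings_image_prodMap hbump, filter_image,
    card_image_of_injective _ (hbump.injective.prodMap hbump.injective)]
  · simp only [Prod.map_fst, add_one_lt_bump_iff]
  · simp only [forall_mem_image, Prod.map_fst, Prod.map_snd]
    exact fun q hq => hbump (hM.fst_lt_snd q hq)
  · simp only [forall_mem_image, Prod.map_snd]
    exact fun q hq => hM.bump_snd_lt hq

theorem card_filter_minCols (hM : IsArcSet n M) :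
    #{x ∈ minCols n M | (p : ℤ) - n < x} = #{q ∈ M | p < q.1} := by
  have hinj : Set.InjOn (fun q : ℕ × ℕ => (q.1 : ℤ) - n) M :=
    fun q hq r hr hqr => hM.injOn_fst hq hr (by simpa using hqr)
  rw [minCols, filter_image, card_image_of_injOn (hinj.mono (filter_subset _ _))]
  simp only [sub_lt_sub_iff_right, Nat.cast_lt]

end IsArcSet

theorem isArcSet_matchSeq {n : ℕ} {p : Fin n → ℕ} (hp : ∀ i, p i ≤ 2 * (i : ℕ)) :
    IsArcSet n (matchSeq n p) := by
  induction n with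
  | zero => constructor <;> simp [matchSeq]
  | succ n ih =>
    rw [matchSeq_succ]
    exact (ih fun i => hp i.castSucc).insertArc_of_le (hp (Fin.last n))

namespace IsDTS

variable {n : ℕ} {p : Fin n → ℕ} {T : DyckTiling n}

theorem upCols_upper (h : IsDTS n p T) (hp : ∀ i, p i ≤ 2 * (i : ℕ)) :
    T.upper.upCols = minCols n (matchSeq n p) := by
  induction h with
  | nil p T => simp [DyckPath.upCols, minCols, matchSeq]
  | cons n p T T' _ hgrow ih =>
    have hlast : p (Fin.last n) ≤ 2 * n := hp (Fin.last n)
    ext x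
    rw [matchSeq_succ, hgrow.mem_upCols_iff (mem_Icc.mpr ⟨by omega, by omega⟩),
      ih fun i => hp i.castSucc, mem_minCols_insertArc]

theorem numTiles_eq_nestings (h : IsDTS n p T) (hp : ∀ i, p i ≤ 2 * (i : ℕ)) :
    T.numTiles = nestings (matchSeq n p) := by
  induction h with
  | nil p T => exact T.numTiles_order_zero
  | cons n p T T' hT hgrow ih =>
    have hp' : ∀ i : Fin n, p i.castSucc ≤ 2 * (i : ℕ) := fun i => hp i.castSucc
    have hM := isArcSet_matchSeq hp'
    rw [matchSeq_succ, hM.nestings_insertArc, hgrow.numTiles_eq, hT.upCols_upper hp',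
      hM.card_filter_minCols, ih hp']

end IsDTS

/-- For every sequence `(p_1, …, p_n)` with `0 ≤ p_i ≤ 2(i-1)`,
`tiles(DTS(p)) = nestings(match(p)) = inv(min-word(match(p)))`. -/
theorem tiles_DTS_eq_nestings (n : ℕ) (p : Fin n → ℕ) (hp : ∀ i, p i ≤ 2 * (i : ℕ)) :
    (∀ T : DyckTiling n, IsDTS n p T → T.numTiles = nestings (matchSeq n p)) ∧
    (∀ w : Fin n → ℕ, IsMinWord n (matchSeq n p) w →
      nestings (matchSeq n p) = wordInv w) :=
  ⟨fun _ hT => hT.numTiles_eq_nestings hp, fun _ hw => hw.nestings_eq_wordInv⟩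

end
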